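/- arXiv:1709.08377 — 7 statements merged into one kernel-verified Lean document; each statement's English description precedes it below -/
import Mathlib

section
/- Let Q be an N×N Hermitian positive semidefinite complex matrix and let N₀ > 0, N₁ ≥ 0, N₂ ≥ 0 be real numbers. Then tr((Q + (N₀ + N₁ + N₂)·I)⁻¹) ≥ (N₀/(N₀ + N₁ + N₂)) · tr((Q + N₀·I)⁻¹). -/
open Matrix
open scoped ComplexOrder

/-!
For `0 < a ≤ b` we have `a • (Q + b • R) ≤ b • (Q + a • R)` in the Loewner order, since the
difference is `(b - a) • Q`. Inversion reverses the Loewner order on positive definite matrices, so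
`(a / b) • (Q + a • R)⁻¹ ≤ (Q + b • R)⁻¹`, and the trace is monotone.
-/

section Resolvent

variable {n K : Type*} [Fintype n] [DecidableEq n] [Field K]

theorem nonsing_inv_smul₀ (A : Matrix n n K) {c : K} (hc : c ≠ 0) : (c • A)⁻¹ = c⁻¹ • A⁻¹ := by
  by_cases hA : IsUnit A.det
  · exact inv_smul' A (Units.mk0 c hc) hA
  · have hcA : ¬IsUnit (c • A).det := by
      rwa [det_smul, IsUnit.mul_iff, and_iff_right (hc.isUnit.pow _)]
    rw [nonsing_inv_apply_not_isUnit _ hcA, nonsing_inv_apply_not_isUnit _ hA, smul_zero]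

variable [PartialOrder K] [StarRing K]

theorem posSemidef_inv_sub_inv [AddLeftMono K] {A B : Matrix n n K} (hA : A.PosDef)
    (hAB : (B - A).PosSemidef) : (A⁻¹ - B⁻¹).PosSemidef := by
  have hB : B.PosDef := by simpa only [add_sub_cancel] using hA.add_posSemidef hAB
  have hdetA : IsUnit A.det := (isUnit_iff_isUnit_det A).1 hA.isUnit
  have hdetB : IsUnit B.det := (isUnit_iff_isUnit_det B).1 hB.isUnit
  -- Expand `B * A⁻¹ * B` with `B = A + (B - A)`.
  have hconj : Bᴴ * (A⁻¹ - B⁻¹) * B = (B - A) + (B - A)ᴴ * A⁻¹ * (B - A) := by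
    rw [hAB.isHermitian.eq, hB.isHermitian.eq]
    simp only [mul_sub, sub_mul, mul_nonsing_inv _ hdetA, mul_nonsing_inv _ hdetB,
      nonsing_inv_mul_cancel_right _ _ hdetA, one_mul]
    abel
  rw [← hB.isUnit.posSemidef_star_left_conjugate_iff, star_eq_conjTranspose, hconj]
  exact hAB.add (hA.inv.posSemidef.conjTranspose_mul_mul_same _)

theorem stmt3_general [StarOrderedRing K] {Q R : Matrix n n K} (hQ : Q.PosSemidef)
    (hR : R.PosDef) {a b : K} (ha : 0 < a) (hab : a ≤ b) :
    ((Q + b • R)⁻¹ - (a / b) • (Q + a • R)⁻¹).PosSemidef := by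
  have hb : 0 < b := ha.trans_le hab
  have hposDef : (Q + b • R).PosDef := (hR.smul hb).posSemidef_add hQ
  have hle : (b • (Q + a • R) - a • (Q + b • R)).PosSemidef := by
    have hdiff : b • (Q + a • R) - a • (Q + b • R) = (b - a) • Q := by module
    exact hdiff ▸ hQ.smul (sub_nonneg.2 hab)
  have hinv := (posSemidef_inv_sub_inv (hposDef.smul ha) hle).smul ha.le
  rwa [nonsing_inv_smul₀ _ ha.ne', nonsing_inv_smul₀ _ hb.ne', smul_sub, smul_inv_smul₀ ha.ne',
    smul_smul, ← div_eq_mul_inv] at hinv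

theorem div_mul_trace_inv_add_smul_le [StarOrderedRing K] {Q R : Matrix n n K}
    (hQ : Q.PosSemidef) (hR : R.PosDef) {a b : K} (ha : 0 < a) (hab : a ≤ b) :
    a / b * (Q + a • R)⁻¹.trace ≤ (Q + b • R)⁻¹.trace := by
  simpa only [trace_sub, trace_smul, smul_eq_mul, sub_nonneg] using
    (stmt3_general hQ hR ha hab).trace_nonneg

end Resolvent

/-- For `Q` Hermitian positive semidefinite, `N₀ > 0`, `N₁, N₂ ≥ 0`,
`tr((Q + (N₀+N₁+N₂)·I)⁻¹) ≥ (N₀/(N₀+N₁+N₂)) · tr((Q + N₀·I)⁻¹)`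
(the traces being real numbers). -/
theorem stmt3 (N : ℕ) (Q : Matrix (Fin N) (Fin N) ℂ) (hQ : Q.PosSemidef)
    (N₀ N₁ N₂ : ℝ) (h0 : 0 < N₀) (h1 : 0 ≤ N₁) (h2 : 0 ≤ N₂) :
    ((Q + (((N₀ + N₁ + N₂ : ℝ)) : ℂ) • (1 : Matrix (Fin N) (Fin N) ℂ))⁻¹).trace.re
      ≥ (N₀ / (N₀ + N₁ + N₂)) *
        ((Q + ((N₀ : ℝ) : ℂ) • (1 : Matrix (Fin N) (Fin N) ℂ))⁻¹).trace.re := by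
  have hle : (N₀ : ℂ) ≤ (N₀ + N₁ + N₂ : ℝ) := Complex.real_le_real.2 (by linarith)
  simpa only [← Complex.ofReal_div, Complex.re_ofReal_mul] using
    (Complex.le_def.1 (div_mul_trace_inv_add_smul_le hQ .one (Complex.zero_lt_real.2 h0) hle)).1
end

section
/- Let Q be an N×N Hermitian positive semidefinite complex matrix, let h ∈ ℂ^N, and let c ≥ N₀ > 0 be real numbers. Then hᴴ (Q + c·I)⁻¹ h ≥ (N₀/c) · hᴴ (Q + N₀·I)⁻¹ h. -/
open Matrix
open scoped ComplexOrder

/-!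
If `0 ≤ q` and `0 < s ≤ t`, then `q + t • d ≤ (t / s) • (q + s • d)`, because the difference is
`(t / s - 1) • q`. Inversion reverses the order on strictly positive elements of a C⋆-algebra;
for complex matrices this yields a Loewner inequality, hence one between quadratic forms.
-/

open Ring in
theorem ringInverse_smul {K R : Type*} [Field K] [Semiring R] [Algebra K R] (k : K) (a : R) :
    (k • a)⁻¹ʳ = k⁻¹ • a⁻¹ʳ := by
  obtain rfl | hk := eq_or_ne k 0
  · simp
  have hunit : IsUnit (algebraMap K R k) := hk.isUnit.map _
  have hinv : (algebraMap K R k)⁻¹ʳ = algebraMap K R k⁻¹ :=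
    inverse_unit (Units.map (algebraMap K R : K →* R) (Units.mk0 k hk))
  rw [Algebra.smul_def, inverse_mul (.inl hunit), hinv, ← Algebra.commutes,
    ← Algebra.smul_def]

theorem add_smul_le_div_smul_add_smul {K A : Type*} [Field K] [LinearOrder K]
    [IsStrictOrderedRing K] [AddCommGroup A] [PartialOrder A] [IsOrderedAddMonoid A] [Module K A]
    [PosSMulMono K A] {q : A} (hq : 0 ≤ q) (d : A) {s t : K} (hs : 0 < s) (hst : s ≤ t) :
    q + t • d ≤ (t / s) • (q + s • d) := by
  have hts : 1 ≤ t / s := (one_le_div hs).2 hst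
  calc q + t • d ≤ (t / s) • q + t • d := by gcongr; exact le_smul_of_one_le_left hq hts
    _ = (t / s) • (q + s • d) := by rw [smul_add, smul_smul, div_mul_cancel₀ t hs.ne']

open Ring in
theorem div_smul_ringInverse_le {A : Type*} [CStarAlgebra A] [PartialOrder A] [StarOrderedRing A]
    {q d : A} {s t : ℝ} (hq : 0 ≤ q) (hqd : IsStrictlyPositive (q + t • d)) (hs : 0 < s)
    (hst : s ≤ t) : (s / t) • (q + s • d)⁻¹ʳ ≤ (q + t • d)⁻¹ʳ :=
  calc (s / t) • (q + s • d)⁻¹ʳ = ((t / s) • (q + s • d))⁻¹ʳ := by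
        rw [ringInverse_smul, inv_div]
    _ ≤ (q + t • d)⁻¹ʳ :=
        CStarAlgebra.ringInverse_le_ringInverse (add_smul_le_div_smul_add_smul hq d hs hst) hqd

open scoped MatrixOrder in
theorem dotProduct_mulVec_le_dotProduct_mulVec {n 𝕜 : Type*} [Fintype n] [RCLike 𝕜]
    {A B : Matrix n n 𝕜} (hAB : A ≤ B) (x : n → 𝕜) : star x ⬝ᵥ A *ᵥ x ≤ star x ⬝ᵥ B *ᵥ x := by
  have hnonneg := (Matrix.le_iff.1 hAB).dotProduct_mulVec_nonneg x
  rwa [sub_mulVec, dotProduct_sub, sub_nonneg] at hnonneg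

open scoped MatrixOrder Matrix.Norms.L2Operator in
theorem stmt4_general {n : Type*} [Fintype n] [DecidableEq n] {Q D : Matrix n n ℂ} {s t : ℝ}
    (hQ : Q.PosSemidef) (hQD : (Q + t • D).PosDef) (hs : 0 < s) (hst : s ≤ t) (x : n → ℂ) :
    (s / t) • (star x ⬝ᵥ (Q + s • D)⁻¹ *ᵥ x) ≤ star x ⬝ᵥ (Q + t • D)⁻¹ *ᵥ x := by
  have hle : (s / t) • (Q + s • D)⁻¹ ≤ (Q + t • D)⁻¹ := by
    simpa only [nonsing_inv_eq_ringInverse] using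
      div_smul_ringInverse_le hQ.nonneg hQD.isStrictlyPositive hs hst
  simpa only [smul_mulVec, dotProduct_smul] using
    dotProduct_mulVec_le_dotProduct_mulVec hle x

/-- For `Q` Hermitian positive semidefinite, `h ∈ ℂ^N` and `c ≥ N₀ > 0`,
`hᴴ (Q + c·I)⁻¹ h ≥ (N₀/c) · hᴴ (Q + N₀·I)⁻¹ h` (both quadratic forms
being real numbers). -/
theorem stmt4 (N : ℕ) (Q : Matrix (Fin N) (Fin N) ℂ) (hQ : Q.PosSemidef)
    (h : Fin N → ℂ) (N₀ c : ℝ) (h0 : 0 < N₀) (hc : N₀ ≤ c) :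
    (star h ⬝ᵥ (Q + ((c : ℝ) : ℂ) • (1 : Matrix (Fin N) (Fin N) ℂ))⁻¹ *ᵥ h).re
      ≥ (N₀ / c) *
        (star h ⬝ᵥ (Q + ((N₀ : ℝ) : ℂ) • (1 : Matrix (Fin N) (Fin N) ℂ))⁻¹ *ᵥ h).re := by
  have hQc : (Q + c • (1 : Matrix (Fin N) (Fin N) ℂ)).PosDef :=
    .posSemidef_add hQ (PosDef.one.smul (h0.trans_le hc))
  simpa only [Complex.coe_smul, Complex.smul_re, smul_eq_mul] using
    (Complex.le_def.1 (stmt4_general hQ hQc h0 hc h)).1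
end

section
/- With the parameters and definitions of the circular-network lower bound (0 < r₀ < r, α > 2, N₀, P_S, P_T > 0, K > 0; A, B, C, M, D, z, ρ̄ as defined), one has A < 0, B < 0, C > 0, M > 0, and D(d₀) > 0 for every d₀ ∈ [r₀, r]. -/
/-!
Since `t ↦ t ^ (2 - α)` decreases and `2 < α`, the quantity `Δ = 2 r ^ (2 - α) - α r₀ ^ (2 - α)` is
negative. It is the denominator of `A`, and `M = 2 N₀ + B Δ ≥ 2 N₀` because `B < 0`. The same
comparison between `d₀` and `r`, with both weights equal to `1`, gives `D d₀ ≥ N₀ + C d₀ ^ 2`.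
-/

section WeightedPowers

variable {x y p c d : ℝ}

lemma mul_rpow_le_mul_rpow_of_nonpos (hx : 0 < x) (hxy : x ≤ y) (hp : p ≤ 0) (hd : 0 ≤ d)
    (hcd : c ≤ d) : c * y ^ p ≤ d * x ^ p :=
  mul_le_mul hcd (Real.rpow_le_rpow_of_nonpos hx hxy hp)
    (Real.rpow_nonneg (hx.le.trans hxy) p) hd

lemma mul_rpow_lt_mul_rpow_of_nonpos (hx : 0 < x) (hxy : x ≤ y) (hp : p ≤ 0) (hd : 0 ≤ d)
    (hcd : c < d) : c * y ^ p < d * x ^ p :=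
  mul_lt_mul hcd (Real.rpow_le_rpow_of_nonpos hx hxy hp)
    (Real.rpow_pos_of_pos (hx.trans_le hxy) p) hd

lemma le_add_mul_rpow_sub_mul_rpow_of_nonpos {b : ℝ} (n : ℝ) (hb : b ≤ 0) (hx : 0 < x)
    (hxy : x ≤ y) (hp : p ≤ 0) (hd : 0 ≤ d) (hcd : c ≤ d) :
    n ≤ n + c * b * y ^ p - d * b * x ^ p := by
  have hdiff : c * y ^ p - d * x ^ p ≤ 0 :=
    sub_nonpos.mpr (mul_rpow_le_mul_rpow_of_nonpos hx hxy hp hd hcd)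
  calc n ≤ n + b * (c * y ^ p - d * x ^ p) :=
        le_add_of_nonneg_right (mul_nonneg_of_nonpos_of_nonpos hb hdiff)
    _ = n + c * b * y ^ p - d * b * x ^ p := by ring

end WeightedPowers

/-- Sign facts for the circular-network lower bound: with `0 < r₀ < r`,
`α > 2`, `N₀, P_S, P_T > 0`, `K > 0` and `A, B, C, M, D` as defined,
one has `A < 0`, `B < 0`, `C > 0`, `M > 0`, and `D d₀ > 0` on `[r₀, r]`. -/
theorem stmt5 (r₀ r α N₀ P_S P_T K A B C M : ℝ) (D : ℝ → ℝ)
    (hr₀ : 0 < r₀) (hr : r₀ < r) (hα : 2 < α) (hN₀ : 0 < N₀)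
    (hPS : 0 < P_S) (hPT : 0 < P_T) (hK : 0 < K)
    (hA : A = N₀ / (2 * (r ^ (2 - α) - r₀ ^ (2 - α)) + (2 - α) * r₀ ^ (2 - α)))
    (hB : B = 2 * P_S * K / ((2 - α) * r ^ 2))
    (hC : C = P_S * K ^ 2 / (P_T * r ^ 2))
    (hM : M = 2 * N₀ + 2 * B * r ^ (2 - α) - α * B * r₀ ^ (2 - α))
    (hD : ∀ d₀, D d₀ = N₀ + B * r ^ (2 - α) - B * d₀ ^ (2 - α) + C * d₀ ^ 2) :
    A < 0 ∧ B < 0 ∧ 0 < C ∧ 0 < M ∧ ∀ d₀ ∈ Set.Icc r₀ r, 0 < D d₀ := by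
  have hr_pos : 0 < r := hr₀.trans hr
  have hα_pos : 0 < α := two_pos.trans hα
  have hexp : 2 - α < 0 := sub_neg.mpr hα
  have hΔ : 2 * r ^ (2 - α) < α * r₀ ^ (2 - α) :=
    mul_rpow_lt_mul_rpow_of_nonpos hr₀ hr.le hexp.le hα_pos.le hα
  have hA_neg : A < 0 := hA ▸ div_neg_of_pos_of_neg hN₀ (by linarith)
  have hB_neg : B < 0 := hB ▸
    div_neg_of_pos_of_neg (by positivity) (mul_neg_of_neg_of_pos hexp (by positivity))
  have hC_pos : 0 < C := hC ▸ by positivity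
  have hM_ge : 2 * N₀ ≤ M := hM ▸
    le_add_mul_rpow_sub_mul_rpow_of_nonpos (2 * N₀) hB_neg.le hr₀ hr.le hexp.le hα_pos.le hα.le
  refine ⟨hA_neg, hB_neg, hC_pos, (mul_pos two_pos hN₀).trans_le hM_ge, fun d₀ ⟨hr₀d, hdr⟩ => ?_⟩
  have hd₀ : 0 < d₀ := hr₀.trans_le hr₀d
  have hD_ge : N₀ + C * d₀ ^ 2 ≤ D d₀ := by
    simpa only [hD, one_mul] using add_le_add_left
      (le_add_mul_rpow_sub_mul_rpow_of_nonpos N₀ hB_neg.le hd₀ hdr hexp.le zero_le_one le_rfl)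
      (C * d₀ ^ 2)
  exact (by positivity : 0 < N₀ + C * d₀ ^ 2).trans_le hD_ge
end

section
/- With the parameters and definitions of the circular-network lower bound (0 < r₀ < r, α > 2, N₀, P_S, P_T > 0, K > 0; A, B, C, M, z as defined), the function z is strictly decreasing on the interval [r₀, r], and z(r₀) > 0. -/
/-!
Put `p = 2 - α`. Dividing by `p` removes all dependence on its sign: `x ↦ x ^ p / p` is increasing
on the positive axis for every `p ≠ 0`, so that `Q = (2 * (r ^ p - r₀ ^ p) + p * r₀ ^ p) / p` is
positive. Since `p * A = N₀ / Q` and `M = 2 * N₀ + (2 * P_S * K / r ^ 2) * Q`, the function `z` is a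
positive multiple of the nonincreasing power `d ^ (1 - α)` plus a positive multiple of
`(r₀ ^ p * d - d ^ (p + 1)) / p = -(d * (d ^ p / p - r₀ ^ p / p))`, which vanishes at `r₀` and is
decreasing beyond it.
-/

section RpowDiv

variable {p x y : ℝ}

lemma strictMonoOn_rpow_div_exponent (hp : p ≠ 0) :
    StrictMonoOn (fun x : ℝ => x ^ p / p) (Set.Ioi 0) := by
  intro x hx y _ hxy
  rcases hp.lt_or_gt with hneg | hpos
  · exact div_lt_div_of_neg_of_lt hneg (Real.rpow_lt_rpow_of_neg hx hxy hneg)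
  · exact div_lt_div_of_pos_right (Real.rpow_lt_rpow (le_of_lt hx) hxy hpos) hpos

lemma two_mul_rpow_sub_add_mul_rpow_div_pos (hp : p ≠ 0) (hx : 0 < x) (hxy : x ≤ y) :
    0 < (2 * (y ^ p - x ^ p) + p * x ^ p) / p := by
  have hmono : x ^ p / p ≤ y ^ p / p :=
    (strictMonoOn_rpow_div_exponent hp).monotoneOn hx (hx.trans_le hxy) hxy
  have hsplit : (2 * (y ^ p - x ^ p) + p * x ^ p) / p = 2 * (y ^ p / p - x ^ p / p) + x ^ p := by
    field_simp
  rw [hsplit]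
  exact add_pos_of_nonneg_of_pos (mul_nonneg zero_le_two (sub_nonneg.2 hmono))
    (Real.rpow_pos_of_pos hx p)

lemma strictAntiOn_rpow_mul_sub_rpow_add_one_div (hp : p ≠ 0) (hx : 0 < x) :
    StrictAntiOn (fun d : ℝ => (x ^ p * d - d ^ (p + 1)) / p) (Set.Ici x) := by
  have hmono : StrictMonoOn (fun d : ℝ => d ^ p / p) (Set.Ici x) :=
    (strictMonoOn_rpow_div_exponent hp).mono fun _ hd => hx.trans_le hd
  have hprod : StrictMonoOn (fun d : ℝ => d * (d ^ p / p - x ^ p / p)) (Set.Ici x) := by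
    intro d hd e he hde
    exact mul_lt_mul'' hde (sub_lt_sub_right (hmono hd he hde) _) (hx.le.trans hd)
      (sub_nonneg.2 (hmono.monotoneOn Set.self_mem_Ici hd hd))
  refine hprod.neg.congr fun d hd => ?_
  have hd_pos : 0 < d := hx.trans_le hd
  simp only [Real.rpow_add_one hd_pos.ne']
  ring

end RpowDiv

theorem stmt6_general (r₀ r α N₀ P_S P_T K A B C M : ℝ) (z : ℝ → ℝ)
    (hr₀ : 0 < r₀) (hr : r₀ ≤ r) (hα : 1 ≤ α) (hα₂ : α ≠ 2) (hN₀ : 0 < N₀)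
    (hPS : 0 < P_S) (hPT : 0 < P_T) (hK : 0 < K)
    (hA : A = N₀ / (2 * (r ^ (2 - α) - r₀ ^ (2 - α)) + (2 - α) * r₀ ^ (2 - α)))
    (hB : B = 2 * P_S * K / ((2 - α) * r ^ 2))
    (hC : C = P_S * K ^ 2 / (P_T * r ^ 2))
    (hM : M = 2 * N₀ + 2 * B * r ^ (2 - α) - α * B * r₀ ^ (2 - α))
    (hz : ∀ d₀, z d₀ = (2 - α) * A * M * d₀ ^ (1 - α)
        + 2 * α * A * C * (r₀ ^ (2 - α) * d₀ - d₀ ^ (3 - α))) :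
    StrictAntiOn z (Set.Ici r₀) ∧ 0 < z r₀ := by
  have hp : 2 - α ≠ 0 := sub_ne_zero.2 hα₂.symm
  have hr_pos : 0 < r := hr₀.trans_le hr
  have hQ := two_mul_rpow_sub_add_mul_rpow_div_pos hp hr₀ hr
  set Q := (2 * (r ^ (2 - α) - r₀ ^ (2 - α)) + (2 - α) * r₀ ^ (2 - α)) / (2 - α) with hQ_def
  have hpA : 0 < (2 - α) * A := by
    have hpA_eq : (2 - α) * A = N₀ / Q := by rw [hA, hQ_def, div_div_eq_mul_div]; ring
    rw [hpA_eq]; positivity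
  have hM_pos : 0 < M := by
    have hM_eq : M = 2 * N₀ + 2 * P_S * K / r ^ 2 * Q := by rw [hM, hB, hQ_def]; field_simp; ring
    rw [hM_eq]; positivity
  have hC_pos : 0 < C := by rw [hC]; positivity
  have hz_eq : z = fun d => (2 - α) * A * M * d ^ (1 - α) +
      2 * α * ((2 - α) * A) * C * ((r₀ ^ (2 - α) * d - d ^ (2 - α + 1)) / (2 - α)) := by
    funext d
    rw [hz, show 2 - α + 1 = 3 - α by ring]
    field_simp
  have hpow : AntitoneOn (fun d : ℝ => d ^ (1 - α)) (Set.Ici r₀) :=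
    (Real.antitoneOn_rpow_Ioi_of_exponent_nonpos (sub_nonpos.2 hα)).mono
      fun _ hd => hr₀.trans_le hd
  have hgap := strictAntiOn_rpow_mul_sub_rpow_add_one_div hp hr₀
  constructor
  · rw [hz_eq]
    exact ((monotone_mul_left_of_nonneg (by positivity)).comp_antitoneOn hpow).add_strictAnti
      ((strictMono_mul_left_of_pos (by positivity)).comp_strictAntiOn hgap)
  · simp only [hz_eq, Real.rpow_add_one hr₀.ne', sub_self, zero_div, mul_zero, add_zero]
    positivity

/-- With the circular-network definitions (`0 < r₀ < r`, `α > 2`,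
`N₀, P_S, P_T > 0`, `K > 0`; `A, B, C, M, z` as defined), `z` is strictly
decreasing on `[r₀, r]` and `z r₀ > 0`. -/
theorem stmt6 (r₀ r α N₀ P_S P_T K A B C M : ℝ) (z : ℝ → ℝ)
    (hr₀ : 0 < r₀) (hr : r₀ < r) (hα : 2 < α) (hN₀ : 0 < N₀)
    (hPS : 0 < P_S) (hPT : 0 < P_T) (hK : 0 < K)
    (hA : A = N₀ / (2 * (r ^ (2 - α) - r₀ ^ (2 - α)) + (2 - α) * r₀ ^ (2 - α)))
    (hB : B = 2 * P_S * K / ((2 - α) * r ^ 2))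
    (hC : C = P_S * K ^ 2 / (P_T * r ^ 2))
    (hM : M = 2 * N₀ + 2 * B * r ^ (2 - α) - α * B * r₀ ^ (2 - α))
    (hz : ∀ d₀, z d₀ = (2 - α) * A * M * d₀ ^ (1 - α)
        + 2 * α * A * C * (r₀ ^ (2 - α) * d₀ - d₀ ^ (3 - α))) :
    StrictAntiOn z (Set.Icc r₀ r) ∧ 0 < z r₀ := by
  obtain ⟨hanti, hpos⟩ := stmt6_general r₀ r α N₀ P_S P_T K A B C M z hr₀ hr.le
    (one_lt_two.trans hα).le hα.ne' hN₀ hPS hPT hK hA hB hC hM hz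
  exact ⟨hanti.mono Set.Icc_subset_Ici_self, hpos⟩
end

section
/- (Existence and uniqueness of the optimal distance threshold.) With the parameters and definitions of the circular-network lower bound (0 < r₀ < r, α > 2, N₀, P_S, P_T > 0, K > 0; A, B, C, M, D, z, ρ̄ as defined), if z(r) < 0, then there exists a unique d_opt ∈ (r₀, r) at which ρ̄ attains its maximum over [r₀, r]; moreover ρ̄ is strictly increasing on [r₀, d_opt] and strictly decreasing on [d_opt, r]. -/
/-!
By the quotient rule `ρ̄` has derivative `z / D ^ 2`, and `D > 0` on `(0, r]` because `B < 0 < C`.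
For `d > 0` one can factor `z d = -A * d ^ (1 - α) * g d` with
`g d = (α - 2) * M - 2 * α * C * (r₀ ^ (2 - α) * d ^ α - d ^ 2)`. Since `A < 0`, this derivative has
the sign of `g`, which is strictly decreasing on `[r₀, r]`, positive at `r₀` because
`g r₀ = (α - 2) * M`, and negative at `r` because `z r < 0`. Hence it changes sign exactly once,
from positive to negative.
-/

open Set

section Unimodal

lemma eq_of_isMaxOn_of_strictMonoOn_of_strictAntiOn {ι β : Type*} [LinearOrder ι] [Preorder β]
    {f : ι → β} {a b c d : ι} (hc : c ∈ Icc a b) (hmono : StrictMonoOn f (Icc a c))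
    (hanti : StrictAntiOn f (Icc c b)) (hd : d ∈ Icc a b) (hmax : IsMaxOn f (Icc a b) d) :
    d = c := by
  have not_lt : ¬ f d < f c := (hmax hc).not_gt
  rcases lt_trichotomy d c with hdc | rfl | hcd
  · exact absurd (hmono ⟨hd.1, hdc.le⟩ ⟨hc.1, le_rfl⟩ hdc) not_lt
  · rfl
  · exact absurd (hanti ⟨le_rfl, hc.2⟩ ⟨hcd.le, hd.2⟩ hcd) not_lt

lemma exists_strictMonoOn_strictAntiOn_of_hasDerivAt_mul {f w g : ℝ → ℝ} {a b : ℝ} (hab : a ≤ b)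
    (hf : ContinuousOn f (Icc a b)) (hf' : ∀ x ∈ Ioo a b, HasDerivAt f (w x * g x) x)
    (hw : ∀ x ∈ Ioo a b, 0 < w x) (hg : ContinuousOn g (Icc a b))
    (hanti : StrictAntiOn g (Icc a b)) (hga : 0 < g a) (hgb : g b < 0) :
    ∃ c ∈ Ioo a b, StrictMonoOn f (Icc a c) ∧ StrictAntiOn f (Icc c b) := by
  obtain ⟨c, hc, hgc⟩ := intermediate_value_Ioo' hab hg ⟨hgb, hga⟩
  have hc' : c ∈ Icc a b := Ioo_subset_Icc_self hc
  refine ⟨c, hc, ?_, ?_⟩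
  · refine strictMonoOn_of_deriv_pos (convex_Icc a c)
      (hf.mono (Icc_subset_Icc_right hc.2.le)) fun x hx => ?_
    rw [interior_Icc] at hx
    have hxab : x ∈ Ioo a b := Ioo_subset_Ioo_right hc.2.le hx
    have hgx : 0 < g x := hgc ▸ hanti (Ioo_subset_Icc_self hxab) hc' hx.2
    rw [(hf' x hxab).deriv]
    exact mul_pos (hw x hxab) hgx
  · refine strictAntiOn_of_deriv_neg (convex_Icc c b)
      (hf.mono (Icc_subset_Icc_left hc.1.le)) fun x hx => ?_
    rw [interior_Icc] at hx
    have hxab : x ∈ Ioo a b := Ioo_subset_Ioo_left hc.1.le hx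
    have hgx : g x < 0 := hgc ▸ hanti hc' (Ioo_subset_Icc_self hxab) hx.1
    rw [(hf' x hxab).deriv]
    exact mul_neg_of_pos_of_neg (hw x hxab) hgx

end Unimodal

section Rpow

lemma strictMonoOn_rpow_mul_rpow_sub_rpow {a p q : ℝ} (ha : 0 < a) (hp : 0 ≤ p) (hpq : p < q) :
    StrictMonoOn (fun x : ℝ => a ^ (p - q) * x ^ q - x ^ p) (Ici a) := by
  have factor : ∀ x, 0 < x →
      a ^ (p - q) * x ^ q - x ^ p = x ^ p * (a ^ (p - q) * x ^ (q - p) - 1) := fun x hx => by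
    have hsplit : x ^ q = x ^ p * x ^ (q - p) := by rw [← Real.rpow_add hx, add_sub_cancel]
    rw [hsplit]
    ring
  intro x hx y _ hxy
  have hx₀ : 0 < x := ha.trans_le hx
  have hy₀ : 0 < y := hx₀.trans hxy
  have hnonneg : 0 ≤ a ^ (p - q) * x ^ (q - p) - 1 := by
    have hone : a ^ (p - q) * a ^ (q - p) = 1 := by
      rw [← Real.rpow_add ha, sub_add_sub_cancel, sub_self, Real.rpow_zero]
    rw [sub_nonneg, ← hone]
    have := Real.rpow_le_rpow ha.le hx (sub_nonneg.2 hpq.le)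
    gcongr
  have hlt : a ^ (p - q) * x ^ (q - p) - 1 < a ^ (p - q) * y ^ (q - p) - 1 := by
    have := Real.rpow_lt_rpow hx₀.le hxy (sub_pos.2 hpq)
    gcongr
  simp only [factor x hx₀, factor y hy₀]
  exact mul_lt_mul' (Real.rpow_le_rpow hx₀.le hxy.le hp) hlt hnonneg (Real.rpow_pos_of_pos hy₀ p)

lemma two_mul_rpow_lt_mul_rpow {r₀ r α : ℝ} (hr₀ : 0 < r₀) (hr : r₀ ≤ r) (hα : 2 < α) :
    2 * r ^ (2 - α) < α * r₀ ^ (2 - α) :=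
  calc 2 * r ^ (2 - α) ≤ 2 * r₀ ^ (2 - α) := by
        have := Real.rpow_le_rpow_of_nonpos hr₀ hr (sub_nonpos.2 hα.le)
        gcongr
    _ < α * r₀ ^ (2 - α) := mul_lt_mul_of_pos_right hα (Real.rpow_pos_of_pos hr₀ _)

end Rpow

section Fidelity

/-- The denominator `D` of the SINR-fidelity bound, as a function of the threshold `d`. -/
noncomputable def fidelityDenom (r α N B C d : ℝ) : ℝ :=
  N + B * r ^ (2 - α) - B * d ^ (2 - α) + C * d ^ 2

/-- The SINR-fidelity lower bound `ρ̄`, with `A`, `B`, `C` as free coefficients. -/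
noncomputable def fidelityBound (r₀ r α N A B C d : ℝ) : ℝ :=
  A * (2 * d ^ (2 - α) - α * r₀ ^ (2 - α)) / fidelityDenom r α N B C d

/-- The constant `M`, which governs the sign of the derivative of `ρ̄` at `r₀`: there
`z r₀ = (2 - α) * A * M * r₀ ^ (1 - α)`. -/
noncomputable def fidelityConst (r₀ r α N B : ℝ) : ℝ :=
  2 * N + 2 * B * r ^ (2 - α) - α * B * r₀ ^ (2 - α)

/-- The function `z`, the numerator of the derivative of the SINR-fidelity bound when `M` is
`fidelityConst r₀ r α N B`. -/
noncomputable def fidelityDerivNum (r₀ α A C M d : ℝ) : ℝ :=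
  (2 - α) * A * M * d ^ (1 - α) + 2 * α * A * C * (r₀ ^ (2 - α) * d - d ^ (3 - α))

/-- The factor `g` of `z d = -A * d ^ (1 - α) * g d`, which carries the sign of `z` when `A < 0`. -/
noncomputable def fidelitySlope (r₀ α C M d : ℝ) : ℝ :=
  (α - 2) * M - 2 * α * C * (r₀ ^ (2 - α) * d ^ α - d ^ 2)

variable {r₀ r α N A B C M d : ℝ}

lemma fidelityDenom_pos (hα : 2 ≤ α) (hN : 0 < N) (hB : B ≤ 0) (hC : 0 ≤ C) (hd : 0 < d)
    (hdr : d ≤ r) : 0 < fidelityDenom r α N B C d := by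
  have hpow : r ^ (2 - α) ≤ d ^ (2 - α) :=
    Real.rpow_le_rpow_of_nonpos hd hdr (sub_nonpos.2 hα)
  have hmul : B * d ^ (2 - α) ≤ B * r ^ (2 - α) := mul_le_mul_of_nonpos_left hpow hB
  have hsq : 0 ≤ C * d ^ 2 := by positivity
  unfold fidelityDenom
  linarith

lemma fidelityConst_pos (hr₀ : 0 < r₀) (hr : r₀ ≤ r) (hα : 2 < α) (hN : 0 < N) (hB : B ≤ 0) :
    0 < fidelityConst r₀ r α N B := by
  have hmul : B * (α * r₀ ^ (2 - α)) ≤ B * (2 * r ^ (2 - α)) :=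
    mul_le_mul_of_nonpos_left (two_mul_rpow_lt_mul_rpow hr₀ hr hα).le hB
  unfold fidelityConst
  linarith

lemma hasDerivAt_fidelityBound (hd : d ≠ 0) (hD : fidelityDenom r α N B C d ≠ 0) :
    HasDerivAt (fidelityBound r₀ r α N A B C)
      (fidelityDerivNum r₀ α A C (fidelityConst r₀ r α N B) d / fidelityDenom r α N B C d ^ 2)
      d := by
  have hpow : HasDerivAt (fun x : ℝ => x ^ (2 - α)) ((2 - α) * d ^ (1 - α)) d := by
    convert Real.hasDerivAt_rpow_const (p := 2 - α) (Or.inl hd) using 3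
    ring
  have hnum := ((hpow.const_mul 2).sub_const (α * r₀ ^ (2 - α))).const_mul A
  have hden : HasDerivAt (fidelityDenom r α N B C)
      (-(B * ((2 - α) * d ^ (1 - α))) + C * (2 * d)) d := by
    refine (((hpow.const_mul B).const_sub (N + B * r ^ (2 - α))).add
      ((hasDerivAt_pow 2 d).const_mul C)).congr_deriv ?_
    norm_num
  refine (hnum.div hden hD).congr_deriv ?_
  have h2 : d ^ (2 - α) = d ^ (1 - α) * d := by
    rw [← Real.rpow_add_one hd]
    ring_nf
  have h3 : d ^ (3 - α) = d ^ (1 - α) * d ^ 2 := by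
    rw [← Real.rpow_add_natCast hd]
    ring_nf
  congr 1
  rw [fidelityDenom, fidelityDerivNum, fidelityConst, h2, h3]
  ring

lemma fidelityDerivNum_eq_mul_fidelitySlope (hd : 0 < d) :
    fidelityDerivNum r₀ α A C M d = -A * d ^ (1 - α) * fidelitySlope r₀ α C M d := by
  have h1 : d ^ (1 - α) * d ^ α = d := by
    rw [← Real.rpow_add hd, sub_add_cancel, Real.rpow_one]
  have h3 : d ^ (3 - α) = d ^ (1 - α) * d ^ 2 := by
    rw [← Real.rpow_add_natCast hd.ne']
    ring_nf
  rw [fidelityDerivNum, fidelitySlope, h3]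
  linear_combination (-2 * α * A * C * r₀ ^ (2 - α)) * h1

lemma fidelitySlope_self (hr₀ : 0 < r₀) : fidelitySlope r₀ α C M r₀ = (α - 2) * M := by
  have hsq : r₀ ^ (2 - α) * r₀ ^ α = r₀ ^ 2 := by
    rw [← Real.rpow_add hr₀, sub_add_cancel, Real.rpow_two]
  rw [fidelitySlope, hsq]
  ring

lemma strictAntiOn_fidelitySlope (hr₀ : 0 < r₀) (hα : 2 < α) (hC : 0 < C) :
    StrictAntiOn (fidelitySlope r₀ α C M) (Ici r₀) := by
  intro x hx y hy hxy
  have hlt : r₀ ^ (2 - α) * x ^ α - x ^ 2 < r₀ ^ (2 - α) * y ^ α - y ^ 2 := by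
    simpa only [Real.rpow_two] using
      strictMonoOn_rpow_mul_rpow_sub_rpow hr₀ zero_le_two hα hx hy hxy
  unfold fidelitySlope
  gcongr

lemma continuous_fidelitySlope (hα : 0 ≤ α) : Continuous (fidelitySlope r₀ α C M) := by
  have := Real.continuous_rpow_const hα
  unfold fidelitySlope
  fun_prop

theorem exists_strictMonoOn_strictAntiOn_fidelityBound (hr₀ : 0 < r₀) (hr : r₀ ≤ r) (hα : 2 < α)
    (hN : 0 < N) (hA : A < 0) (hB : B ≤ 0) (hC : 0 < C)
    (hz : fidelityDerivNum r₀ α A C (fidelityConst r₀ r α N B) r < 0) :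
    ∃ c ∈ Ioo r₀ r, StrictMonoOn (fidelityBound r₀ r α N A B C) (Icc r₀ c) ∧
      StrictAntiOn (fidelityBound r₀ r α N A B C) (Icc c r) := by
  have hpos : ∀ d ∈ Icc r₀ r, 0 < d := fun d hd => hr₀.trans_le hd.1
  have hDpos : ∀ d ∈ Icc r₀ r, 0 < fidelityDenom r α N B C d := fun d hd =>
    fidelityDenom_pos hα.le hN hB hC.le (hpos d hd) hd.2
  have hweight : ∀ d, 0 < d → 0 < -A * d ^ (1 - α) := fun d hd =>
    mul_pos (neg_pos.2 hA) (Real.rpow_pos_of_pos hd _)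
  have hderiv : ∀ d ∈ Icc r₀ r, HasDerivAt (fidelityBound r₀ r α N A B C)
      (-A * d ^ (1 - α) / fidelityDenom r α N B C d ^ 2 *
        fidelitySlope r₀ α C (fidelityConst r₀ r α N B) d) d := fun d hd => by
    rw [div_mul_eq_mul_div, ← fidelityDerivNum_eq_mul_fidelitySlope (hpos d hd)]
    exact hasDerivAt_fidelityBound (hpos d hd).ne' (hDpos d hd).ne'
  have hslope_left : 0 < fidelitySlope r₀ α C (fidelityConst r₀ r α N B) r₀ := by
    rw [fidelitySlope_self hr₀]
    exact mul_pos (sub_pos.2 hα) (fidelityConst_pos hr₀ hr hα hN hB)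
  have hslope_right : fidelitySlope r₀ α C (fidelityConst r₀ r α N B) r < 0 := by
    have hr_pos : 0 < r := hr₀.trans_le hr
    rw [fidelityDerivNum_eq_mul_fidelitySlope hr_pos] at hz
    exact neg_of_mul_neg_right hz (hweight r hr_pos).le
  exact exists_strictMonoOn_strictAntiOn_of_hasDerivAt_mul hr
    (fun d hd => (hderiv d hd).continuousAt.continuousWithinAt)
    (fun d hd => hderiv d (Ioo_subset_Icc_self hd))
    (fun d hd => div_pos (hweight d (hr₀.trans hd.1))
      (pow_pos (hDpos d (Ioo_subset_Icc_self hd)) 2))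
    (continuous_fidelitySlope (zero_le_two.trans hα.le)).continuousOn
    ((strictAntiOn_fidelitySlope hr₀ hα hC).mono Icc_subset_Ici_self) hslope_left hslope_right

end Fidelity

/-- Existence and uniqueness of the optimal distance threshold: with the
circular-network definitions and `z r < 0`, there is a unique
`d_opt ∈ (r₀, r)` at which `ρ̄` attains its maximum over `[r₀, r]`;
moreover `ρ̄` is strictly increasing on `[r₀, d_opt]` and strictly
decreasing on `[d_opt, r]`. -/
theorem stmt9 (r₀ r α N₀ P_S P_T K A B C M : ℝ) (D z ρ : ℝ → ℝ)
    (hr₀ : 0 < r₀) (hr : r₀ < r) (hα : 2 < α) (hN₀ : 0 < N₀)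
    (hPS : 0 < P_S) (hPT : 0 < P_T) (hK : 0 < K)
    (hA : A = N₀ / (2 * (r ^ (2 - α) - r₀ ^ (2 - α)) + (2 - α) * r₀ ^ (2 - α)))
    (hB : B = 2 * P_S * K / ((2 - α) * r ^ 2))
    (hC : C = P_S * K ^ 2 / (P_T * r ^ 2))
    (hM : M = 2 * N₀ + 2 * B * r ^ (2 - α) - α * B * r₀ ^ (2 - α))
    (hD : ∀ d₀, D d₀ = N₀ + B * r ^ (2 - α) - B * d₀ ^ (2 - α) + C * d₀ ^ 2)
    (hz : ∀ d₀, z d₀ = (2 - α) * A * M * d₀ ^ (1 - α)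
        + 2 * α * A * C * (r₀ ^ (2 - α) * d₀ - d₀ ^ (3 - α)))
    (hρ : ∀ d₀, ρ d₀ = A * (2 * d₀ ^ (2 - α) - α * r₀ ^ (2 - α)) / D d₀)
    (hzr : z r < 0) :
    ∃ dopt ∈ Set.Ioo r₀ r,
      IsMaxOn ρ (Set.Icc r₀ r) dopt
      ∧ StrictMonoOn ρ (Set.Icc r₀ dopt)
      ∧ StrictAntiOn ρ (Set.Icc dopt r)
      ∧ ∀ d ∈ Set.Ioo r₀ r, IsMaxOn ρ (Set.Icc r₀ r) d → d = dopt := by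
  have hA_neg : A < 0 := hA ▸ div_neg_of_pos_of_neg hN₀
    (by linarith [two_mul_rpow_lt_mul_rpow hr₀ hr.le hα])
  have hr_pos : 0 < r := hr₀.trans hr
  have hB_neg : B < 0 := hB ▸ div_neg_of_pos_of_neg (by positivity)
    (mul_neg_of_neg_of_pos (sub_neg.2 hα) (by positivity))
  have hC_pos : 0 < C := hC ▸ by positivity
  obtain rfl : M = fidelityConst r₀ r α N₀ B := hM
  obtain rfl : D = fidelityDenom r α N₀ B C := funext hD
  obtain rfl : z = fidelityDerivNum r₀ α A C (fidelityConst r₀ r α N₀ B) := funext hz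
  obtain rfl : ρ = fidelityBound r₀ r α N₀ A B C := funext hρ
  obtain ⟨c, hc, hmono, hanti⟩ := exists_strictMonoOn_strictAntiOn_fidelityBound
    hr₀ hr.le hα hN₀ hA_neg hB_neg.le hC_pos hzr
  have hc' : c ∈ Icc r₀ r := Ioo_subset_Icc_self hc
  exact ⟨c, hc, isMaxOn_Icc_of_mono_anti hmono.monotoneOn hanti.antitoneOn, hmono, hanti,
    fun d hd => eq_of_isMaxOn_of_strictMonoOn_of_strictAntiOn hc' hmono hanti
      (Ioo_subset_Icc_self hd)⟩
end

section
/- (Concavity of the Dinkelbach subproblem objective.) Let 0 < r₀ < r, α > 1, N₀ > 0, P_Σ > 0, c ≥ 0, M₀ > 0, and q ≥ 0 be real numbers. Define G : (r₀, r) → ℝ by G(d₀) = N₀·∫_{r₀}^{d₀} x^{1−α}·(2/r²) dx − q·M₀·( N₀ + P_Σ·∫_{d₀}^{r} x^{1−α}·(2/r²) dx + c·P_Σ·∫_{r₀}^{d₀} (2x/r²) dx ). Then G is strictly concave on (r₀, r). -/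
/-!
Moving the variable lower limit to `r₀`, the objective becomes, up to a constant,
`∫_{r₀}^{d₀} g` with `g x = (N₀ + q·M₀·P_Σ)·x^{1−α}·(2/r²) − q·M₀·c·P_Σ·(2x/r²)`. The path-loss term
is strictly decreasing and the link-distance density is increasing, so `g` is strictly decreasing.
Hence, for `x < y < z`, the mean of `g` is above `g y` on `[x, y]` and below `g y` on `[y, z]`: the
secant slopes of the integral strictly decrease.
-/

open Set intervalIntegral
open MeasureTheory (volume)

section StrictAntiOn

variable {f : ℝ → ℝ} {x y : ℝ}

theorem mul_sub_lt_integral_of_strictAntiOn (hxy : x < y) (hf : StrictAntiOn f (Icc x y)) :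
    f y * (y - x) < ∫ t in x..y, f t := by
  have hint : IntervalIntegrable f volume x y :=
    AntitoneOn.intervalIntegrable (uIcc_of_le hxy.le ▸ hf.antitoneOn)
  have hpos : 0 < ∫ t in x..y, (f t - f y) :=
    intervalIntegral_pos_of_pos_on (hint.sub intervalIntegrable_const)
      (fun t ht => sub_pos.2 (hf (Ioo_subset_Icc_self ht) (right_mem_Icc.2 hxy.le) ht.2)) hxy
  rw [integral_sub hint intervalIntegrable_const, integral_const, smul_eq_mul] at hpos
  linarith

theorem integral_lt_mul_sub_of_strictAntiOn (hxy : x < y) (hf : StrictAntiOn f (Icc x y)) :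
    ∫ t in x..y, f t < f x * (y - x) := by
  have hint : IntervalIntegrable f volume x y :=
    AntitoneOn.intervalIntegrable (uIcc_of_le hxy.le ▸ hf.antitoneOn)
  have hpos : 0 < ∫ t in x..y, (f x - f t) :=
    intervalIntegral_pos_of_pos_on (intervalIntegrable_const.sub hint)
      (fun t ht => sub_pos.2 (hf (left_mem_Icc.2 hxy.le) (Ioo_subset_Icc_self ht) ht.1)) hxy
  rw [integral_sub intervalIntegrable_const hint, integral_const, smul_eq_mul] at hpos
  linarith

theorem strictConcaveOn_integral_of_strictAntiOn {s : Set ℝ} {a : ℝ} (hs : Convex ℝ s)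
    (hf : StrictAntiOn f s) (ha : a ∈ s) : StrictConcaveOn ℝ s fun u => ∫ t in a..u, f t := by
  refine strictConcaveOn_of_slope_strict_anti_adjacent hs fun {x y z} hx hz hxy hyz => ?_
  have hy : y ∈ s := hs.ordConnected.out hx hz ⟨hxy.le, hyz.le⟩
  have hint {u : ℝ} (hu : u ∈ s) : IntervalIntegrable f volume a u :=
    (hf.antitoneOn.mono (hs.ordConnected.uIcc_subset ha hu)).intervalIntegrable
  rw [integral_interval_sub_left (hint hz) (hint hy),
    integral_interval_sub_left (hint hy) (hint hx)]
  calc (∫ t in y..z, f t) / (z - y)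
      < f y := (div_lt_iff₀ (sub_pos.2 hyz)).2 <|
        integral_lt_mul_sub_of_strictAntiOn hyz (hf.mono (hs.ordConnected.out hy hz))
    _ < (∫ t in x..y, f t) / (y - x) := (lt_div_iff₀ (sub_pos.2 hxy)).2 <|
        mul_sub_lt_integral_of_strictAntiOn hxy (hf.mono (hs.ordConnected.out hx hy))

end StrictAntiOn

theorem strictAntiOn_const_mul_sub_const_mul {ι 𝕜 : Type*} [Preorder ι] [Ring 𝕜] [PartialOrder 𝕜]
    [IsStrictOrderedRing 𝕜] {s : Set ι} {f g : ι → 𝕜} {a b : 𝕜} (hf : StrictAntiOn f s)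
    (hg : MonotoneOn g s) (ha : 0 < a) (hb : 0 ≤ b) :
    StrictAntiOn (fun x => a * f x - b * g x) s := by
  intro x hx y hy hxy
  have hlt : a * f y < a * f x := mul_lt_mul_of_pos_left (hf hx hy hxy) ha
  have hle : b * g x ≤ b * g y := mul_le_mul_of_nonneg_left (hg hx hy hxy.le) hb
  simpa only [sub_eq_add_neg] using add_lt_add_of_lt_of_le hlt (neg_le_neg hle)

theorem strictAntiOn_rpow_mul_const {p k : ℝ} (hp : p < 0) (hk : 0 < k) :
    StrictAntiOn (fun x : ℝ => x ^ p * k) (Ioi 0) := fun _ hx _ hy hxy =>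
  mul_lt_mul_of_pos_right (Real.strictAntiOn_rpow_Ioi_of_exponent_neg hp hx hy hxy) hk

/-- In the circular network `f x = 2x/r²` is the link-distance density and `ℓ x = x^{−α} f x`. -/
theorem stmt11_general {s : Set ℝ} {ℓ f : ℝ → ℝ} {r₀ r N₀ Psum c M₀ q : ℝ} (hs : Convex ℝ s)
    (hr₀ : r₀ ∈ s) (hr : r ∈ s) (hℓ : StrictAntiOn ℓ s) (hf : MonotoneOn f s)
    (hN₀ : 0 < N₀) (hP : 0 ≤ Psum) (hc : 0 ≤ c) (hM₀ : 0 ≤ M₀) (hq : 0 ≤ q) :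
    StrictConcaveOn ℝ s fun d₀ =>
      N₀ * (∫ x in r₀..d₀, ℓ x)
        - q * M₀ * (N₀ + Psum * (∫ x in d₀..r, ℓ x) + c * Psum * (∫ x in r₀..d₀, f x)) := by
  have hanti : StrictAntiOn (fun x => (N₀ + q * M₀ * Psum) * ℓ x - q * M₀ * (c * Psum) * f x) s :=
    strictAntiOn_const_mul_sub_const_mul hℓ hf (by positivity) (by positivity)
  refine ((strictConcaveOn_integral_of_strictAntiOn hs hanti hr₀).add_const
    (-(q * M₀ * (N₀ + Psum * ∫ x in r₀..r, ℓ x)))).congr fun d hd => ?_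
  have hℓint {u : ℝ} (hu : u ∈ s) : IntervalIntegrable ℓ volume r₀ u :=
    (hℓ.antitoneOn.mono (hs.ordConnected.uIcc_subset hr₀ hu)).intervalIntegrable
  have hfint : IntervalIntegrable f volume r₀ d :=
    (hf.mono (hs.ordConnected.uIcc_subset hr₀ hd)).intervalIntegrable
  have htail : ∫ x in d..r, ℓ x = (∫ x in r₀..r, ℓ x) - ∫ x in r₀..d, ℓ x :=
    (integral_interval_sub_left (hℓint hr) (hℓint hd)).symm
  simp only [Pi.add_apply, htail,
    integral_sub ((hℓint hd).const_mul _) (hfint.const_mul _), integral_const_mul]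
  ring

/-- Concavity of the Dinkelbach subproblem objective for the circular
network: `G(d₀) = N₀·∫_{r₀}^{d₀} x^{1−α}(2/r²) dx
− q·M₀·(N₀ + P_Σ·∫_{d₀}^{r} x^{1−α}(2/r²) dx + c·P_Σ·∫_{r₀}^{d₀} (2x/r²) dx)`
is strictly concave on `(r₀, r)`. -/
theorem stmt11 (r₀ r α N₀ Psum c M₀ q : ℝ) (G : ℝ → ℝ)
    (hr₀ : 0 < r₀) (hr : r₀ < r) (hα : 1 < α) (hN₀ : 0 < N₀)
    (hP : 0 < Psum) (hc : 0 ≤ c) (hM₀ : 0 < M₀) (hq : 0 ≤ q)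
    (hG : ∀ d₀, G d₀ =
      N₀ * (∫ x in r₀..d₀, x ^ (1 - α) * (2 / r ^ 2))
        - q * M₀ * (N₀ + Psum * (∫ x in d₀..r, x ^ (1 - α) * (2 / r ^ 2))
          + c * Psum * (∫ x in r₀..d₀, 2 * x / r ^ 2))) :
    StrictConcaveOn ℝ (Set.Ioo r₀ r) G := by
  obtain rfl : G = _ := funext hG
  exact (stmt11_general (convex_Ioi 0) hr₀ (hr₀.trans hr)
    (strictAntiOn_rpow_mul_const (sub_neg.2 hα) (div_pos two_pos (pow_pos (hr₀.trans hr) 2)))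
    (((monotone_id.const_mul zero_le_two).div_const (sq_nonneg r)).monotoneOn _)
    hN₀ hP.le hc hM₀.le hq).subset (fun _ hd => hr₀.trans hd.1) (convex_Ioo r₀ r)
end

section
/- (Unique optimal distance threshold with non-orthogonal training.) Let 0 < r₀ < r, α > 2, N₀ > 0, P_S > 0, P_T > 0, K > 0, 0 < τ < K and μ > 0 be real numbers. Define A = N₀/(2(r^{2−α} − r₀^{2−α}) + (2−α)·r₀^{2−α}), B = 2·P_S·K/((2−α)·r²), C′ = (P_S·K²/P_T + 2·P_S·K·(1 − τ/K)·μ)/r², M = 2·N₀ + 2·B·r^{2−α} − α·B·r₀^{2−α}, D′(d₀) = N₀ + B·r^{2−α} − B·d₀^{2−α} + C′·d₀², z′(d₀) = (2−α)·A·M·d₀^{1−α} + 2·α·A·C′·(r₀^{2−α}·d₀ − d₀^{3−α}), and ρ̄′(d₀) = A·(2·d₀^{2−α} − α·r₀^{2−α})/D′(d₀). Then C′ > 0, z′ is strictly decreasing on [r₀, r] with z′(r₀) > 0, and if z′(r) < 0 there exists a unique d_opt ∈ (r₀, r) at which ρ̄′ attains its maximum over [r₀, r]. -/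
/-!
The powers with exponent `2 - α` are multiples of the primitive `u x = x ^ (2 - α) / (2 - α)` of
`x ^ (1 - α)`, which is increasing whatever the sign of `2 - α`. In terms of `u`, the bound is
a positive multiple of `S x / I x`, where `S x = 2 * u x - α * u r₀` and
`I x = N₀ + β * (u r - u x) + C' * x ^ 2` with `β = (2 - α) * B ≥ 0`. The numerator of the
derivative of `S / I` simplifies to
`(2 * N₀ + β * S r) * x ^ (1 - α) - 2 * α * C' * (x * (u x - u r₀))`, which is strictly decreasing
for `1 ≤ α`. Hence `S / I` increases up to the zero of this slope and decreases afterwards.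
-/

section UniqueMaximizer

theorem lt_of_strictMonoOn_of_strictAntiOn {X Y : Type*} [LinearOrder X] [Preorder Y] {f : X → Y}
    {a b c x : X} (hmono : StrictMonoOn f (Set.Icc a c)) (hanti : StrictAntiOn f (Set.Icc c b))
    (hx : x ∈ Set.Icc a b) (hxc : x ≠ c) : f x < f c := by
  rcases hxc.lt_or_gt with h | h
  · exact hmono ⟨hx.1, h.le⟩ ⟨hx.1.trans h.le, le_rfl⟩ h
  · exact hanti ⟨le_rfl, h.le.trans hx.2⟩ ⟨h.le, hx.2⟩ h

theorem isMaxOn_const_mul_iff {X : Type*} {f : X → ℝ} {s : Set X} {c : X} {k : ℝ} (hk : 0 < k) :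
    IsMaxOn (fun x => k * f x) s c ↔ IsMaxOn f s c := by
  simp only [isMaxOn_iff, mul_le_mul_iff_right₀ hk]

theorem exists_unique_isMaxOn_of_hasDerivAt_div {f g w : ℝ → ℝ} {a b : ℝ} (hab : a ≤ b)
    (hf : ∀ x ∈ Set.Icc a b, HasDerivAt f (g x / w x) x) (hw : ∀ x ∈ Set.Icc a b, 0 < w x)
    (hg : StrictAntiOn g (Set.Icc a b)) (hgc : ContinuousOn g (Set.Icc a b))
    (hga : 0 < g a) (hgb : g b < 0) :
    ∃ c ∈ Set.Ioo a b, IsMaxOn f (Set.Icc a b) c ∧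
      ∀ d ∈ Set.Icc a b, IsMaxOn f (Set.Icc a b) d → d = c := by
  obtain ⟨c, hc, hgc0⟩ := intermediate_value_Ioo' hab hgc ⟨hgb, hga⟩
  have hcI : c ∈ Set.Icc a b := Set.Ioo_subset_Icc_self hc
  have hfc : ContinuousOn f (Set.Icc a b) := HasDerivAt.continuousOn hf
  have hmono : StrictMonoOn f (Set.Icc a c) := by
    refine strictMonoOn_of_deriv_pos (convex_Icc a c)
      (hfc.mono (Set.Icc_subset_Icc_right hc.2.le)) fun x hx => ?_
    rw [interior_Icc] at hx
    have hxI : x ∈ Set.Icc a b := ⟨hx.1.le, (hx.2.trans hc.2).le⟩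
    rw [(hf x hxI).deriv]
    exact div_pos (hgc0 ▸ hg hxI hcI hx.2) (hw x hxI)
  have hanti : StrictAntiOn f (Set.Icc c b) := by
    refine strictAntiOn_of_deriv_neg (convex_Icc c b)
      (hfc.mono (Set.Icc_subset_Icc_left hc.1.le)) fun x hx => ?_
    rw [interior_Icc] at hx
    have hxI : x ∈ Set.Icc a b := ⟨(hc.1.trans hx.1).le, hx.2.le⟩
    rw [(hf x hxI).deriv]
    exact div_neg_of_neg_of_pos (hgc0 ▸ hg hcI hxI hx.1) (hw x hxI)
  have hlt : ∀ x ∈ Set.Icc a b, x ≠ c → f x < f c := fun x hx =>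
    lt_of_strictMonoOn_of_strictAntiOn hmono hanti hx
  refine ⟨c, hc, fun x hx => ?_, fun d hd hmax => ?_⟩
  · rcases eq_or_ne x c with rfl | hxc
    · exact le_refl (f x)
    · exact (hlt x hx hxc).le
  · by_contra hdc
    exact (hlt d hd hdc).not_ge (hmax hcI)

end UniqueMaximizer

section PathLoss

/-- The primitive of the radial path-loss density `x ^ (1 - α) = x * x ^ (-α)` on the plane, which
takes the junk value `0` for `α = 2`. -/
noncomputable def pathLossPrimitive (α x : ℝ) : ℝ :=
  x ^ (2 - α) / (2 - α)

/-- The mean power received over the links up to the distance threshold `x` in a network with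
minimum link distance `a`, up to a positive factor. For `α ≠ 2` and `0 < a ≤ x` it equals
`∫ t in 0..x, 2 * t * max t a ^ (-α)`. -/
noncomputable def signalPower (α a x : ℝ) : ℝ :=
  2 * pathLossPrimitive α x - α * pathLossPrimitive α a

/-- The mean power of the disturbances at distance threshold `x` in a network of radius `b`: noise
`N`, neglected links longer than `x` (weight `β`), and channel estimation error (constant `C`). -/
noncomputable def disturbancePower (α b N β C x : ℝ) : ℝ :=
  N + β * (pathLossPrimitive α b - pathLossPrimitive α x) + C * x ^ 2

/-- The numerator of the derivative of `signalPower / disturbancePower` with respect to the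
distance threshold; it is a positive multiple of the function `z'` of `stmt14`. -/
noncomputable def sinrSlope (α a b N β C x : ℝ) : ℝ :=
  (2 * N + β * signalPower α a b) * x ^ (1 - α)
    - 2 * α * C * (x * (pathLossPrimitive α x - pathLossPrimitive α a))

variable {α a b x N β C : ℝ}

theorem two_sub_mul_pathLossPrimitive (hα : α ≠ 2) (x : ℝ) :
    (2 - α) * pathLossPrimitive α x = x ^ (2 - α) :=
  mul_div_cancel₀ _ (sub_ne_zero.2 hα.symm)

theorem two_sub_mul_signalPower (hα : α ≠ 2) (a x : ℝ) :
    (2 - α) * signalPower α a x = 2 * x ^ (2 - α) - α * a ^ (2 - α) := by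
  rw [← two_sub_mul_pathLossPrimitive hα, ← two_sub_mul_pathLossPrimitive hα, signalPower]
  ring

theorem hasDerivAt_pathLossPrimitive (hα : α ≠ 2) (hx : 0 < x) :
    HasDerivAt (pathLossPrimitive α) (x ^ (1 - α)) x := by
  have hα' : 2 - α ≠ 0 := sub_ne_zero.2 hα.symm
  refine ((Real.hasDerivAt_rpow_const (Or.inl hx.ne')).div_const (2 - α)).congr_deriv ?_
  rw [mul_div_cancel_left₀ _ hα']
  ring_nf

theorem continuousOn_pathLossPrimitive (hα : α ≠ 2) :
    ContinuousOn (pathLossPrimitive α) (Set.Ioi 0) :=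
  HasDerivAt.continuousOn fun _ => hasDerivAt_pathLossPrimitive hα

theorem strictMonoOn_pathLossPrimitive (hα : α ≠ 2) :
    StrictMonoOn (pathLossPrimitive α) (Set.Ioi 0) := by
  refine strictMonoOn_of_deriv_pos (convex_Ioi 0) (continuousOn_pathLossPrimitive hα) fun x hx => ?_
  rw [interior_Ioi] at hx
  rw [(hasDerivAt_pathLossPrimitive hα hx).deriv]
  exact Real.rpow_pos_of_pos hx _

theorem strictMonoOn_mul_pathLossPrimitive_sub (hα : α ≠ 2) (ha : 0 < a) :
    StrictMonoOn (fun x => x * (pathLossPrimitive α x - pathLossPrimitive α a)) (Set.Ici a) := by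
  intro x hx y _ hxy
  have hx₀ : 0 < x := ha.trans_le hx
  have hu := strictMonoOn_pathLossPrimitive hα
  exact mul_lt_mul'' hxy (sub_lt_sub_right (hu hx₀ (hx₀.trans hxy) hxy) _) hx₀.le
    (sub_nonneg.2 (hu.monotoneOn ha hx₀ hx))

theorem signalPower_pos (hα : α ≠ 2) (ha : 0 < a) (hax : a ≤ x) : 0 < signalPower α a x := by
  have hu : pathLossPrimitive α a ≤ pathLossPrimitive α x :=
    (strictMonoOn_pathLossPrimitive hα).monotoneOn ha (ha.trans_le hax) hax
  calc
    0 < 2 * (pathLossPrimitive α x - pathLossPrimitive α a) + a ^ (2 - α) :=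
      add_pos_of_nonneg_of_pos (by linarith) (Real.rpow_pos_of_pos ha _)
    _ = signalPower α a x := by
      rw [← two_sub_mul_pathLossPrimitive hα, signalPower]
      ring

theorem disturbancePower_pos (hα : α ≠ 2) (hN : 0 < N) (hβ : 0 ≤ β) (hC : 0 ≤ C) (hx : 0 < x)
    (hxb : x ≤ b) : 0 < disturbancePower α b N β C x := by
  have hu : 0 ≤ pathLossPrimitive α b - pathLossPrimitive α x :=
    sub_nonneg.2 ((strictMonoOn_pathLossPrimitive hα).monotoneOn hx (hx.trans_le hxb) hxb)
  unfold disturbancePower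
  positivity

theorem hasDerivAt_signalPower_div_disturbancePower (hα : α ≠ 2) (hx : 0 < x)
    (hI : disturbancePower α b N β C x ≠ 0) :
    HasDerivAt (fun y => signalPower α a y / disturbancePower α b N β C y)
      (sinrSlope α a b N β C x / disturbancePower α b N β C x ^ 2) x := by
  have hu := hasDerivAt_pathLossPrimitive hα hx
  have hS : HasDerivAt (signalPower α a) (2 * x ^ (1 - α)) x :=
    (hu.const_mul 2).sub_const _
  have hI' : HasDerivAt (disturbancePower α b N β C)
      (β * -x ^ (1 - α) + C * (2 * x)) x :=
    ((((hu.const_sub _).const_mul β).const_add N).fun_add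
      ((hasDerivAt_pow 2 x).const_mul C)).congr_deriv (by simp)
  have hxu : x ^ (1 - α) * x = (2 - α) * pathLossPrimitive α x := by
    rw [two_sub_mul_pathLossPrimitive hα, ← Real.rpow_add_one hx.ne']
    ring_nf
  refine (hS.fun_div hI' hI).congr_deriv (congrArg (· / _) ?_)
  unfold sinrSlope disturbancePower signalPower
  linear_combination 2 * C * x * hxu

theorem continuousOn_sinrSlope (hα : α ≠ 2) :
    ContinuousOn (sinrSlope α a b N β C) (Set.Ioi 0) := by
  have hpow : ContinuousOn (fun x : ℝ => x ^ (1 - α)) (Set.Ioi 0) :=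
    continuousOn_id.rpow_const fun x hx => Or.inl (Set.mem_Ioi.1 hx).ne'
  exact (hpow.const_mul _).sub (continuousOn_const.mul
    (continuousOn_id.mul ((continuousOn_pathLossPrimitive hα).sub continuousOn_const)))

theorem strictAntiOn_sinrSlope (hα₁ : 1 ≤ α) (hα₂ : α ≠ 2) (ha : 0 < a) (hab : a ≤ b)
    (hN : 0 ≤ N) (hβ : 0 ≤ β) (hC : 0 < C) :
    StrictAntiOn (sinrSlope α a b N β C) (Set.Ici a) := by
  intro x hx y hy hxy
  have hM : 0 ≤ 2 * N + β * signalPower α a b := by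
    have := signalPower_pos hα₂ ha hab
    positivity
  have hpow : y ^ (1 - α) ≤ x ^ (1 - α) :=
    Real.rpow_le_rpow_of_nonpos (ha.trans_le hx) hxy.le (sub_nonpos.2 hα₁)
  simp only [sinrSlope, sub_eq_add_neg _ (2 * α * C * _)]
  exact add_lt_add_of_le_of_lt (mul_le_mul_of_nonneg_left hpow hM) <|
    neg_lt_neg (mul_lt_mul_of_pos_left
      (strictMonoOn_mul_pathLossPrimitive_sub hα₂ ha hx hy hxy) (by positivity))

theorem sinrSlope_self_pos (hα : α ≠ 2) (ha : 0 < a) (hab : a ≤ b) (hN : 0 < N) (hβ : 0 ≤ β) :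
    0 < sinrSlope α a b N β C a := by
  have hS := signalPower_pos hα ha hab
  rw [sinrSlope, sub_self, mul_zero, mul_zero, sub_zero]
  positivity

theorem exists_unique_isMaxOn_signalPower_div_disturbancePower (hα₁ : 1 ≤ α) (hα₂ : α ≠ 2)
    (ha : 0 < a) (hab : a ≤ b) (hN : 0 < N) (hβ : 0 ≤ β) (hC : 0 < C)
    (hslope : sinrSlope α a b N β C b < 0) :
    ∃ c ∈ Set.Ioo a b,
      IsMaxOn (fun x => signalPower α a x / disturbancePower α b N β C x) (Set.Icc a b) c ∧
      ∀ d ∈ Set.Icc a b,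
        IsMaxOn (fun x => signalPower α a x / disturbancePower α b N β C x) (Set.Icc a b) d →
          d = c := by
  have hI : ∀ x ∈ Set.Icc a b, 0 < disturbancePower α b N β C x := fun x hx =>
    disturbancePower_pos hα₂ hN hβ hC.le (ha.trans_le hx.1) hx.2
  exact exists_unique_isMaxOn_of_hasDerivAt_div hab
    (fun x hx => hasDerivAt_signalPower_div_disturbancePower hα₂ (ha.trans_le hx.1) (hI x hx).ne')
    (fun x hx => pow_pos (hI x hx) 2)
    ((strictAntiOn_sinrSlope hα₁ hα₂ ha hab hN.le hβ hC).mono Set.Icc_subset_Ici_self)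
    ((continuousOn_sinrSlope hα₂).mono fun x hx => ha.trans_le hx.1)
    (sinrSlope_self_pos hα₂ ha hab hN hβ) hslope

theorem disturbancePower_two_sub_mul (hα : α ≠ 2) (B : ℝ) :
    disturbancePower α b N ((2 - α) * B) C x
      = N + B * b ^ (2 - α) - B * x ^ (2 - α) + C * x ^ 2 := by
  rw [← two_sub_mul_pathLossPrimitive hα b, ← two_sub_mul_pathLossPrimitive hα x,
    disturbancePower]
  ring

theorem two_sub_mul_mul_sinrSlope (hα : α ≠ 2) (hx : 0 < x) (A B : ℝ) :
    (2 - α) * A * sinrSlope α a b N ((2 - α) * B) C x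
      = (2 - α) * A * (2 * N + 2 * B * b ^ (2 - α) - α * B * a ^ (2 - α)) * x ^ (1 - α)
        + 2 * α * A * C * (a ^ (2 - α) * x - x ^ (3 - α)) := by
  have hx₃ : x ^ (3 - α) = x ^ (2 - α) * x := by
    rw [← Real.rpow_add_one hx.ne']
    ring_nf
  rw [hx₃, ← two_sub_mul_pathLossPrimitive hα a, ← two_sub_mul_pathLossPrimitive hα b,
    ← two_sub_mul_pathLossPrimitive hα x, sinrSlope, signalPower]
  ring

end PathLoss

section Network

variable {r α P_S P_T K τ μ : ℝ}

theorem contaminatedErrorConstant_pos (hr : 0 < r) (hPS : 0 < P_S) (hPT : 0 < P_T) (hK : 0 < K)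
    (hτK : τ ≤ K) (hμ : 0 ≤ μ) :
    0 < (P_S * K ^ 2 / P_T + 2 * P_S * K * (1 - τ / K) * μ) / r ^ 2 := by
  have hτ : 0 ≤ 1 - τ / K := sub_nonneg.2 ((div_le_one hK).2 hτK)
  positivity

theorem two_sub_mul_interferenceConstant_nonneg (hα : α ≠ 2) (hPS : 0 ≤ P_S) (hK : 0 ≤ K) :
    0 ≤ (2 - α) * (2 * P_S * K / ((2 - α) * r ^ 2)) := by
  rw [← div_div, div_right_comm, mul_div_cancel₀ _ (sub_ne_zero.2 hα.symm)]
  positivity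

theorem two_sub_mul_normalization_pos {r₀ N₀ : ℝ} (hα : α ≠ 2) (hr₀ : 0 < r₀) (hr : r₀ ≤ r)
    (hN₀ : 0 < N₀) :
    0 < (2 - α) * (N₀ / (2 * (r ^ (2 - α) - r₀ ^ (2 - α)) + (2 - α) * r₀ ^ (2 - α))) := by
  have hden : 2 * (r ^ (2 - α) - r₀ ^ (2 - α)) + (2 - α) * r₀ ^ (2 - α)
      = (2 - α) * signalPower α r₀ r := by
    rw [two_sub_mul_signalPower hα]
    ring
  rw [hden, ← div_div, div_right_comm, mul_div_cancel₀ _ (sub_ne_zero.2 hα.symm)]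
  exact div_pos hN₀ (signalPower_pos hα hr₀ hr)

end Network

theorem stmt14_general (r₀ r α N₀ P_S P_T K τ μ A B C' M : ℝ) (D' z' ρ' : ℝ → ℝ)
    (hr₀ : 0 < r₀) (hr : r₀ < r) (hα₁ : 1 ≤ α) (hα₂ : α ≠ 2) (hN₀ : 0 < N₀)
    (hPS : 0 < P_S) (hPT : 0 < P_T) (hK : 0 < K)
    (hτK : τ ≤ K) (hμ : 0 ≤ μ)
    (hA : A = N₀ / (2 * (r ^ (2 - α) - r₀ ^ (2 - α)) + (2 - α) * r₀ ^ (2 - α)))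
    (hB : B = 2 * P_S * K / ((2 - α) * r ^ 2))
    (hC' : C' = (P_S * K ^ 2 / P_T + 2 * P_S * K * (1 - τ / K) * μ) / r ^ 2)
    (hM : M = 2 * N₀ + 2 * B * r ^ (2 - α) - α * B * r₀ ^ (2 - α))
    (hD' : ∀ d₀, D' d₀ = N₀ + B * r ^ (2 - α) - B * d₀ ^ (2 - α) + C' * d₀ ^ 2)
    (hz' : ∀ d₀, z' d₀ = (2 - α) * A * M * d₀ ^ (1 - α)
        + 2 * α * A * C' * (r₀ ^ (2 - α) * d₀ - d₀ ^ (3 - α)))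
    (hρ' : ∀ d₀, ρ' d₀ = A * (2 * d₀ ^ (2 - α) - α * r₀ ^ (2 - α)) / D' d₀) :
    0 < C'
    ∧ StrictAntiOn z' (Set.Icc r₀ r)
    ∧ 0 < z' r₀
    ∧ (z' r < 0 → ∃ dopt ∈ Set.Ioo r₀ r,
        IsMaxOn ρ' (Set.Icc r₀ r) dopt
        ∧ ∀ d ∈ Set.Icc r₀ r, IsMaxOn ρ' (Set.Icc r₀ r) d → d = dopt) := by
  have hC : 0 < C' := hC' ▸ contaminatedErrorConstant_pos (hr₀.trans hr) hPS hPT hK hτK hμ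
  have hβ : 0 ≤ (2 - α) * B :=
    hB ▸ two_sub_mul_interferenceConstant_nonneg hα₂ hPS.le hK.le
  have hA_pos : 0 < (2 - α) * A := hA ▸ two_sub_mul_normalization_pos hα₂ hr₀ hr.le hN₀
  have hz : ∀ d ∈ Set.Icc r₀ r,
      z' d = (2 - α) * A * sinrSlope α r₀ r N₀ ((2 - α) * B) C' d := fun d hd => by
    rw [hz', hM, two_sub_mul_mul_sinrSlope hα₂ (hr₀.trans_le hd.1)]
  have hρ : ρ' = fun d => (2 - α) * A *
      (signalPower α r₀ d / disturbancePower α r N₀ ((2 - α) * B) C' d) := funext fun d => by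
    rw [hρ', hD', disturbancePower_two_sub_mul hα₂, ← two_sub_mul_signalPower hα₂]
    ring
  refine ⟨hC, fun x hx y hy hxy => ?_, ?_, fun hzr => ?_⟩
  · rw [hz x hx, hz y hy]
    exact mul_lt_mul_of_pos_left
      (strictAntiOn_sinrSlope hα₁ hα₂ hr₀ hr.le hN₀.le hβ hC hx.1 hy.1 hxy) hA_pos
  · rw [hz r₀ (Set.left_mem_Icc.2 hr.le)]
    exact mul_pos hA_pos (sinrSlope_self_pos hα₂ hr₀ hr.le hN₀ hβ)
  · rw [hz r (Set.right_mem_Icc.2 hr.le)] at hzr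
    simp only [hρ, isMaxOn_const_mul_iff hA_pos]
    exact exists_unique_isMaxOn_signalPower_div_disturbancePower hα₁ hα₂ hr₀ hr.le hN₀ hβ hC
      (neg_of_mul_neg_right hzr hA_pos.le)

/-- Unique optimal distance threshold with non-orthogonal training: with
the pilot-contaminated constant `C′`, one has `C′ > 0`, `z′` is strictly
decreasing on `[r₀, r]` with `z′ r₀ > 0`, and if `z′ r < 0` there is a
unique `d_opt ∈ (r₀, r)` at which `ρ̄′` attains its maximum over `[r₀, r]`. -/
theorem stmt14 (r₀ r α N₀ P_S P_T K τ μ A B C' M : ℝ) (D' z' ρ' : ℝ → ℝ)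
    (hr₀ : 0 < r₀) (hr : r₀ < r) (hα : 2 < α) (hN₀ : 0 < N₀)
    (hPS : 0 < P_S) (hPT : 0 < P_T) (hK : 0 < K)
    (hτ0 : 0 < τ) (hτK : τ < K) (hμ : 0 < μ)
    (hA : A = N₀ / (2 * (r ^ (2 - α) - r₀ ^ (2 - α)) + (2 - α) * r₀ ^ (2 - α)))
    (hB : B = 2 * P_S * K / ((2 - α) * r ^ 2))
    (hC' : C' = (P_S * K ^ 2 / P_T + 2 * P_S * K * (1 - τ / K) * μ) / r ^ 2)
    (hM : M = 2 * N₀ + 2 * B * r ^ (2 - α) - α * B * r₀ ^ (2 - α))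
    (hD' : ∀ d₀, D' d₀ = N₀ + B * r ^ (2 - α) - B * d₀ ^ (2 - α) + C' * d₀ ^ 2)
    (hz' : ∀ d₀, z' d₀ = (2 - α) * A * M * d₀ ^ (1 - α)
        + 2 * α * A * C' * (r₀ ^ (2 - α) * d₀ - d₀ ^ (3 - α)))
    (hρ' : ∀ d₀, ρ' d₀ = A * (2 * d₀ ^ (2 - α) - α * r₀ ^ (2 - α)) / D' d₀) :
    0 < C'
    ∧ StrictAntiOn z' (Set.Icc r₀ r)
    ∧ 0 < z' r₀
    ∧ (z' r < 0 → ∃ dopt ∈ Set.Ioo r₀ r,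
        IsMaxOn ρ' (Set.Icc r₀ r) dopt
        ∧ ∀ d ∈ Set.Ioo r₀ r, IsMaxOn ρ' (Set.Icc r₀ r) d → d = dopt) := by
  obtain ⟨hC, hanti, hz₀, hmax⟩ := stmt14_general r₀ r α N₀ P_S P_T K τ μ A B C' M D' z' ρ' hr₀ hr
    (by linarith) hα.ne' hN₀ hPS hPT hK hτK.le hμ.le hA hB hC' hM hD' hz' hρ'
  exact ⟨hC, hanti, hz₀, fun hzr => let ⟨c, hc, hcmax, huniq⟩ := hmax hzr
    ⟨c, hc, hcmax, fun d hd => huniq d (Set.Ioo_subset_Icc_self hd)⟩⟩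
end
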